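/- Let S be a nonempty finite index set, let K > 0, and for each m ∈ S let c_m > 0, d_m ≥ 0, β_m > 0 be constants, and let e > 0. Define λ_m(p) = K·p·β_m²/(K·p·β_m + 1) and γ̂(p) = ( ∑_{m∈S} √(c_m · λ_m(p)) )² / ( ∑_{m∈S} d_m·(β_m − λ_m(p)) + e ). Let α ≥ 0 and let 0 < p₁ < p₂ be such that α ≤ g(1/γ̂(p₁)), where g(x) = (1 + x)·ln(1 + 1/x)/√(2x + 1). Then f_α(1/γ̂(p₁)) < f_α(1/γ̂(p₂)), where f_α(x) = ln(1 + 1/x) − α·√(2x + 1)/(1 + x). In particular, the finite-blocklength rate f_α(1/γ̂(p)) is monotonically increasing in the pilot power p, so it is maximized at the maximal admissible pilot power. -/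

import Mathlib

/-- The threshold function `g(x) = (1 + x) · ln(1 + 1/x) / √(2x + 1)` for `x > 0`. -/
noncomputable def g (x : ℝ) : ℝ := (1 + x) * Real.log (1 + 1 / x) / Real.sqrt (2 * x + 1)

/-- The finite-blocklength rate as a function of the inverse SINR:
`f_α(x) = ln(1 + 1/x) − α·√(2x + 1)/(1 + x)`. -/
noncomputable def fα (α x : ℝ) : ℝ :=
  Real.log (1 + 1 / x) - α * Real.sqrt (2 * x + 1) / (1 + x)

/-!
Up to the positive factor `√(2x + 1) / (1 + x)`, the rate `f_α(x)` is `g(x) - α`. Both that factor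
and `g` are strictly decreasing on `x > 0`, so `f_α` is strictly decreasing as long as `α ≤ g(x)`.
More pilot power raises every estimate variance `λ_m`, which raises the numerator of the SINR and
lowers its denominator; hence it lowers the inverse SINR `x` and raises the rate.
-/

open Set

/-- The square root of the channel dispersion `1 - (1 + γ)⁻²` of the Gaussian channel, written in
terms of the inverse SINR `x = 1 / γ`; it is the coefficient of `-α` in `fα`. -/
noncomputable def sqrtDispersion (x : ℝ) : ℝ := √(2 * x + 1) / (1 + x)

lemma sqrtDispersion_pos {x : ℝ} (hx : 0 < x) : 0 < sqrtDispersion x := by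
  unfold sqrtDispersion
  positivity

lemma strictAntiOn_sqrtDispersion : StrictAntiOn sqrtDispersion (Ici 0) := by
  intro x (hx : 0 ≤ x) y _ hxy
  have hy : 0 < y := hx.trans_lt hxy
  have hfactor : 0 < (y - x) * (x + y + 2 * (x * y)) :=
    mul_pos (sub_pos.2 hxy) (by positivity)
  unfold sqrtDispersion
  rw [div_lt_div_iff₀ (by positivity) (by positivity)]
  refine lt_of_pow_lt_pow_left₀ 2 (by positivity) ?_
  rw [mul_pow, mul_pow, Real.sq_sqrt (by positivity), Real.sq_sqrt (by positivity)]
  linear_combination hfactor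

lemma fα_eq_sqrtDispersion_mul (α : ℝ) {x : ℝ} (hx : 0 < x) :
    fα α x = sqrtDispersion x * (g x - α) := by
  unfold fα g sqrtDispersion
  field_simp

lemma mul_log_one_add_one_div_le_one {x : ℝ} (hx : 0 < x) : x * Real.log (1 + 1 / x) ≤ 1 := by
  have hlog : Real.log (1 + 1 / x) ≤ 1 / x := by
    linarith [Real.log_le_sub_one_of_pos (show 0 < 1 + 1 / x by positivity)]
  calc x * Real.log (1 + 1 / x) ≤ x * (1 / x) := by gcongr
    _ = 1 := mul_one_div_cancel hx.ne'

lemma hasDerivAt_log_one_add_one_div {x : ℝ} (hx : 0 < x) :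
    HasDerivAt (fun y ↦ Real.log (1 + 1 / y)) (-1 / (x * (1 + x))) x := by
  have hinv : HasDerivAt (fun y : ℝ ↦ 1 + 1 / y) (-(x ^ 2)⁻¹) x := by
    simpa only [one_div] using (hasDerivAt_inv hx.ne').const_add 1
  refine (hinv.log (by positivity)).congr_deriv ?_
  field_simp
  ring

lemma hasDerivAt_g {x : ℝ} (hx : 0 < x) :
    HasDerivAt g ((x * Real.log (1 + 1 / x) - 2 - 1 / x) / √(2 * x + 1) ^ 3) x := by
  have hrad : 0 < 2 * x + 1 := by positivity
  have hnum : HasDerivAt (fun y ↦ (1 + y) * Real.log (1 + 1 / y))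
      (Real.log (1 + 1 / x) - 1 / x) x := by
    refine (((hasDerivAt_id' x).const_add 1).fun_mul
      (hasDerivAt_log_one_add_one_div hx)).congr_deriv ?_
    field_simp
    ring
  have hden : HasDerivAt (fun y : ℝ ↦ √(2 * y + 1)) (1 / √(2 * x + 1)) x :=
    ((((hasDerivAt_id' x).const_mul 2).add_const 1).sqrt hrad.ne').congr_deriv
      (mul_div_mul_left 1 _ two_ne_zero)
  have hsqrt : √(2 * x + 1) ≠ 0 := (Real.sqrt_pos.2 hrad).ne'
  refine (hnum.fun_div hden hsqrt).congr_deriv ?_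
  field_simp
  rw [Real.sq_sqrt (by positivity)]
  ring

lemma strictAntiOn_g : StrictAntiOn g (Ioi 0) := by
  refine strictAntiOn_of_deriv_neg (convex_Ioi 0)
    (fun x hx ↦ (hasDerivAt_g hx).continuousAt.continuousWithinAt) fun x hx ↦ ?_
  rw [interior_Ioi, mem_Ioi] at hx
  have hinv : 0 < 1 / x := one_div_pos.2 hx
  rw [(hasDerivAt_g hx).deriv]
  exact div_neg_of_neg_of_pos (by linarith [mul_log_one_add_one_div_le_one hx]) (by positivity)

lemma strictAntiOn_fα {α y : ℝ} (hα : α ≤ g y) : StrictAntiOn (fα α) (Ioc 0 y) := by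
  intro a ⟨ha, _⟩ b ⟨hb, hby⟩ hab
  have hgb : α ≤ g b := hα.trans (strictAntiOn_g.antitoneOn hb (hb.trans_le hby) hby)
  rw [fα_eq_sqrtDispersion_mul α ha, fα_eq_sqrtDispersion_mul α hb]
  calc sqrtDispersion b * (g b - α)
      ≤ sqrtDispersion a * (g b - α) :=
        mul_le_mul_of_nonneg_right (strictAntiOn_sqrtDispersion ha.le hb.le hab).le
          (sub_nonneg.2 hgb)
    _ < sqrtDispersion a * (g a - α) :=
        mul_lt_mul_of_pos_left (sub_lt_sub_right (strictAntiOn_g ha hb hab) α)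
          (sqrtDispersion_pos ha)

/-- The variance `λ(p)` of the MMSE estimate, at pilot power `p`, of a channel with large-scale
fading coefficient `b`; the received pilot signal-to-noise ratio is `K * p * b`. -/
noncomputable def mmseVariance (K b p : ℝ) : ℝ := K * p * b ^ 2 / (K * p * b + 1)

section mmseVariance

variable {K b p : ℝ}

lemma sub_mmseVariance (h : K * p * b + 1 ≠ 0) :
    b - mmseVariance K b p = b / (K * p * b + 1) := by
  rw [mmseVariance, eq_div_iff h, sub_mul, div_mul_cancel₀ _ h]
  ring

lemma mmseVariance_nonneg (hK : 0 ≤ K) (hb : 0 ≤ b) (hp : 0 ≤ p) : 0 ≤ mmseVariance K b p := by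
  unfold mmseVariance
  positivity

lemma mmseVariance_pos (hK : 0 < K) (hb : 0 < b) (hp : 0 < p) : 0 < mmseVariance K b p := by
  unfold mmseVariance
  positivity

lemma mmseVariance_le (hK : 0 ≤ K) (hb : 0 ≤ b) (hp : 0 ≤ p) : mmseVariance K b p ≤ b := by
  rw [← sub_nonneg, sub_mmseVariance (by positivity)]
  positivity

lemma strictMonoOn_mmseVariance (hK : 0 < K) (hb : 0 < b) :
    StrictMonoOn (mmseVariance K b) (Ici 0) := by
  intro p (hp : 0 ≤ p) q (hq : 0 ≤ q) hpq
  rw [← sub_lt_sub_iff_left b, sub_mmseVariance (by positivity), sub_mmseVariance (by positivity)]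
  gcongr

end mmseVariance

/-- The common form `γ̂` of the lower bounds on the SINR under MRT, FZF and LZF precoding, as a
function of the variances `v m` of the channel estimates. -/
noncomputable def sinrLowerBound {ι : Type*} (S : Finset ι) (c d β : ι → ℝ) (e : ℝ) (v : ι → ℝ) :
    ℝ :=
  (∑ m ∈ S, √(c m * v m)) ^ 2 / (∑ m ∈ S, d m * (β m - v m) + e)

section sinrLowerBound

variable {ι : Type*} {S : Finset ι} {c d β v w : ι → ℝ} {e K : ℝ}

lemma sinrLowerBound_denom_pos (hd : ∀ m ∈ S, 0 ≤ d m) (he : 0 < e) (hvβ : ∀ m ∈ S, v m ≤ β m) :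
    0 < ∑ m ∈ S, d m * (β m - v m) + e :=
  add_pos_of_nonneg_of_pos
    (Finset.sum_nonneg fun m hm ↦ mul_nonneg (hd m hm) (sub_nonneg.2 (hvβ m hm))) he

lemma sinrLowerBound_pos (hS : S.Nonempty) (hc : ∀ m ∈ S, 0 < c m) (hd : ∀ m ∈ S, 0 ≤ d m)
    (he : 0 < e) (hv : ∀ m ∈ S, 0 < v m) (hvβ : ∀ m ∈ S, v m ≤ β m) :
    0 < sinrLowerBound S c d β e v :=
  div_pos
    (pow_pos (Finset.sum_pos (fun m hm ↦ Real.sqrt_pos.2 (mul_pos (hc m hm) (hv m hm))) hS) 2)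
    (sinrLowerBound_denom_pos hd he hvβ)

lemma sinrLowerBound_lt_sinrLowerBound (hS : S.Nonempty) (hc : ∀ m ∈ S, 0 < c m)
    (hd : ∀ m ∈ S, 0 ≤ d m) (he : 0 < e) (hv : ∀ m ∈ S, 0 ≤ v m) (hvw : ∀ m ∈ S, v m < w m)
    (hwβ : ∀ m ∈ S, w m ≤ β m) :
    sinrLowerBound S c d β e v < sinrLowerBound S c d β e w := by
  have hsignal : ∑ m ∈ S, √(c m * v m) < ∑ m ∈ S, √(c m * w m) :=
    Finset.sum_lt_sum_of_nonempty hS fun m hm ↦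
      Real.sqrt_lt_sqrt (mul_nonneg (hc m hm).le (hv m hm))
        (mul_lt_mul_of_pos_left (hvw m hm) (hc m hm))
  have hinterference : ∑ m ∈ S, d m * (β m - w m) ≤ ∑ m ∈ S, d m * (β m - v m) :=
    Finset.sum_le_sum fun m hm ↦
      mul_le_mul_of_nonneg_left (sub_le_sub_left (hvw m hm).le (β m)) (hd m hm)
  exact div_lt_div₀ (pow_lt_pow_left₀ hsignal (by positivity) two_ne_zero)
    (add_le_add_left hinterference e) (sq_nonneg _) (sinrLowerBound_denom_pos hd he hwβ)

lemma strictMonoOn_sinrLowerBound_mmseVariance (hS : S.Nonempty) (hK : 0 < K)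
    (hc : ∀ m ∈ S, 0 < c m) (hd : ∀ m ∈ S, 0 ≤ d m) (hβ : ∀ m ∈ S, 0 < β m) (he : 0 < e) :
    StrictMonoOn (fun p ↦ sinrLowerBound S c d β e fun m ↦ mmseVariance K (β m) p) (Ici 0) :=
  fun _ hp _ hq hpq ↦ sinrLowerBound_lt_sinrLowerBound hS hc hd he
    (fun m hm ↦ mmseVariance_nonneg hK.le (hβ m hm).le hp)
    (fun m hm ↦ strictMonoOn_mmseVariance hK (hβ m hm) hp hq hpq)
    (fun m hm ↦ mmseVariance_le hK.le (hβ m hm).le hq)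

lemma sinrLowerBound_mmseVariance_pos {p : ℝ} (hS : S.Nonempty) (hK : 0 < K)
    (hc : ∀ m ∈ S, 0 < c m) (hd : ∀ m ∈ S, 0 ≤ d m) (hβ : ∀ m ∈ S, 0 < β m) (he : 0 < e)
    (hp : 0 < p) : 0 < sinrLowerBound S c d β e fun m ↦ mmseVariance K (β m) p :=
  sinrLowerBound_pos hS hc hd he (fun m hm ↦ mmseVariance_pos hK (hβ m hm) hp)
    (fun m hm ↦ mmseVariance_le hK.le (hβ m hm).le hp.le)

theorem rate_strictMono_in_pilot_power_general {α p₁ : ℝ} (hS : S.Nonempty) (hK : 0 < K)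
    (hc : ∀ m ∈ S, 0 < c m) (hd : ∀ m ∈ S, 0 ≤ d m) (hβ : ∀ m ∈ S, 0 < β m) (he : 0 < e)
    (hp₁ : 0 < p₁)
    (hα : α ≤ g (1 / sinrLowerBound S c d β e fun m ↦ mmseVariance K (β m) p₁)) :
    StrictMonoOn (fun p ↦ fα α (1 / sinrLowerBound S c d β e fun m ↦ mmseVariance K (β m) p))
      (Ici p₁) := by
  set γ : ℝ → ℝ := fun p ↦ sinrLowerBound S c d β e fun m ↦ mmseVariance K (β m) p
  have hγ_pos : ∀ p ∈ Ici p₁, 0 < γ p := fun p hp ↦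
    sinrLowerBound_mmseVariance_pos hS hK hc hd hβ he (hp₁.trans_le hp)
  have hγ_mono : StrictMonoOn γ (Ici p₁) :=
    (strictMonoOn_sinrLowerBound_mmseVariance hS hK hc hd hβ he).mono (Ici_subset_Ici.2 hp₁.le)
  have hγ_inv_anti : StrictAntiOn (fun p ↦ 1 / γ p) (Ici p₁) := fun p hp q hq hpq ↦
    one_div_lt_one_div_of_lt (hγ_pos p hp) (hγ_mono hp hq hpq)
  exact (strictAntiOn_fα hα).comp hγ_inv_anti fun p hp ↦
    ⟨one_div_pos.2 (hγ_pos p hp), hγ_inv_anti.antitoneOn self_mem_Ici hp hp⟩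

end sinrLowerBound

/-- Lemma 2 of the paper: with `λ_m(p) = K·p·β_m²/(K·p·β_m + 1)` and
`γ̂(p) = (∑_{m∈S} √(c_m λ_m(p)))² / (∑_{m∈S} d_m (β_m − λ_m(p)) + e)`,
if `α ≥ 0`, `0 < p₁ < p₂` and `α ≤ g(1/γ̂(p₁))`, then
`f_α(1/γ̂(p₁)) < f_α(1/γ̂(p₂))`: the finite-blocklength rate is monotonically
increasing in the pilot power, hence maximized at the maximal pilot power. -/
theorem rate_strictMono_in_pilot_power {ι : Type*} (S : Finset ι) (hS : S.Nonempty)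
    (K : ℝ) (hK : 0 < K)
    (c d β : ι → ℝ)
    (hc : ∀ m ∈ S, 0 < c m) (hd : ∀ m ∈ S, 0 ≤ d m) (hβ : ∀ m ∈ S, 0 < β m)
    (e : ℝ) (he : 0 < e)
    (lam : ι → ℝ → ℝ) (hlam : ∀ m p, lam m p = K * p * (β m) ^ 2 / (K * p * β m + 1))
    (γhat : ℝ → ℝ)
    (hγhat : ∀ p, γhat p =
      (∑ m ∈ S, Real.sqrt (c m * lam m p)) ^ 2 /
        (∑ m ∈ S, d m * (β m - lam m p) + e))
    (α : ℝ) (hα : 0 ≤ α)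
    (p₁ p₂ : ℝ) (hp₁ : 0 < p₁) (hp₁₂ : p₁ < p₂)
    (hαg : α ≤ g (1 / γhat p₁)) :
    fα α (1 / γhat p₁) < fα α (1 / γhat p₂) := by
  obtain rfl : lam = fun m ↦ mmseVariance K (β m) := funext₂ hlam
  obtain rfl : γhat = fun p ↦ sinrLowerBound S c d β e fun m ↦ mmseVariance K (β m) p :=
    funext hγhat
  exact rate_strictMono_in_pilot_power_general hS hK hc hd hβ he hp₁ hαg
    self_mem_Ici hp₁₂.le hp₁₂
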